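/- Let 1 ≤ a ≤ r and let γ ∈ R^+ satisfy ⟨α, γ^∨⟩ = 0 for all α ∈ Δ_P \ {α_a}. Then for any w ∈ W one has gr_{a−1}(ws_γ) = gr_{a−1}(w) and gr_r(ws_γ) ≤ gr_r(w) + Σ_{k=a}^r a·e_k (lexicographic order on Z^r). -/

import Mathlib

/-!
The components of the grading are inversion counts: `ℓ(v_k)` is the number of inversions of `w`
lying in `R_{Δ_k}` but not in `R_{Δ_{k-1}}`. Indeed all inversions of `v_k` lie there,
`v_{k-1} ⋯ v_1` permutes the positive roots of that kind, and `v_{r+1} ⋯ v_{k+1}` preserves the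
signs of the roots in `R_{Δ_k}`.

The reflection `s_γ` fixes every vector supported on `Δ_P` whose coefficient at `α_a` vanishes. So
for `k < a` the `k`-th count is the same for `w` and `w s_γ`, and for `a ≤ k ≤ r` it can increase
by at most the number of positive roots supported on `α_1, …, α_k` that involve both `α_a` and
`α_k`. There are at most `a` of those: by type `A` the `α_1`-coefficient of `s_1 ⋯ s_k β` is minus
the `α_k`-coefficient of `β`, so `s_{a+1} ⋯ s_k` embeds them into the inversion set of
`s_1 ⋯ s_a`, an element of length at most `a`. The asserted inequality thus holds coordinate by
coordinate.
-/

open scoped BigOperators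

/-- A reduced crystallographic root system with a fixed base `α_1, …, α_n` of simple
roots, bundled with its Weyl group `W`.  A root `γ` is recorded by its integer
coordinate vector in the basis of simple roots (so the `i`-th simple root is
`Pi.single i 1`), and `cor γ` is the coordinate vector of the coroot `γ^∨` in the
basis of simple coroots (hence `cor γ i = ⟨χ_i, γ^∨⟩` for the fundamental weights
`χ_i`).  `A i j = ⟨α_i, α_j^∨⟩` is the Cartan matrix, `σ γ` is the reflection `s_γ`
and `act` is the action of the Weyl group on the root lattice. -/
structure RootSystemData (n : ℕ) where
  A : Fin n → Fin n → ℤ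
  R : Finset (Fin n → ℤ)
  cor : (Fin n → ℤ) → (Fin n → ℤ)
  W : Type
  [grp : Group W]
  σ : (Fin n → ℤ) → W
  act : W → (Fin n → ℤ) → (Fin n → ℤ)
  simple_mem : ∀ i : Fin n, (Pi.single i 1 : Fin n → ℤ) ∈ R
  root_ne_zero : ∀ γ ∈ R, γ ≠ 0
  neg_mem : ∀ γ ∈ R, -γ ∈ R
  pos_or_neg : ∀ γ ∈ R, (∀ i, 0 ≤ γ i) ∨ (∀ i, γ i ≤ 0)
  reduced : ∀ γ ∈ R, ∀ k : ℤ, k • γ ∈ R → k = 1 ∨ k = -1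
  cor_simple : ∀ i : Fin n, cor (Pi.single i 1) = Pi.single i 1
  cor_neg : ∀ γ ∈ R, cor (-γ) = -(cor γ)
  pair_self : ∀ γ ∈ R, (∑ i, ∑ j, γ i * A i j * cor γ j) = 2
  act_one : ∀ x, act 1 x = x
  act_mul : ∀ w w' x, act (w * w') x = act w (act w' x)
  act_refl : ∀ γ ∈ R, ∀ x, act (σ γ) x = x - (∑ i, ∑ j, x i * A i j * cor γ j) • γ
  act_mem : ∀ (w : W), ∀ γ ∈ R, act w γ ∈ R
  cor_refl : ∀ γ ∈ R, ∀ β ∈ R,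
    cor (act (σ γ) β) = cor β - (∑ i, ∑ j, γ i * A i j * cor β j) • cor γ
  refl_sq : ∀ γ ∈ R, σ γ * σ γ = 1
  refl_act : ∀ (w : W), ∀ γ ∈ R, σ (act w γ) = w * σ γ * w⁻¹
  act_faithful : ∀ w w' : W, (∀ γ ∈ R, act w γ = act w' γ) → w = w'
  generated : ∀ w : W, ∃ l : List (Fin n), w = (l.map fun i => σ (Pi.single i 1)).prod

namespace RootSystemData

instance {n : ℕ} (c : RootSystemData n) : Group c.W := c.grp

/-- the pairing `⟨x, λ⟩` between an element `x` of the root lattice (coordinates in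
the basis of simple roots) and an element `λ` of the coroot lattice (coordinates in
the basis of simple coroots) -/
def pair {n : ℕ} (c : RootSystemData n) (x lam : Fin n → ℤ) : ℤ :=
  ∑ i, ∑ j, x i * c.A i j * lam j

/-- the `i`-th simple root -/
def sroot {n : ℕ} (_c : RootSystemData n) (i : Fin n) : Fin n → ℤ := Pi.single i 1

/-- the simple reflection `s_i` -/
def s {n : ℕ} (c : RootSystemData n) (i : Fin n) : c.W := c.σ (c.sroot i)

/-- `s_{α_{t+1}}` for a `0`-based natural number index `t` (`= 1` when out of range) -/
def sN {n : ℕ} (c : RootSystemData n) (t : ℕ) : c.W := if h : t < n then c.s ⟨t, h⟩ else 1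

/-- `⟨2ρ, λ⟩ = Σ_{β ∈ R^+} ⟨β, λ⟩`, where `ρ` is the half-sum of the positive roots -/
def pairTwoRho {n : ℕ} (c : RootSystemData n) (lam : Fin n → ℤ) : ℤ :=
  ∑ β ∈ c.R, if ∀ i, 0 ≤ β i then c.pair β lam else 0

/-- the length of `w ∈ W` with respect to the simple reflections -/
noncomputable def len {n : ℕ} (c : RootSystemData n) (w : c.W) : ℕ :=
  sInf {k | ∃ l : List (Fin n), l.length = k ∧ (l.map c.s).prod = w}

/-- the parabolic subgroup `W_S` generated by the simple reflections indexed by `S` -/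
def Wsub {n : ℕ} (c : RootSystemData n) (S : Finset (Fin n)) : Subgroup c.W :=
  Subgroup.closure (c.s '' ↑S)

/-- `w ∈ W_T^S`: `w ∈ W_T` and `w` has minimal length in the coset `w W_S` -/
def MinRep {n : ℕ} (c : RootSystemData n) (T S : Finset (Fin n)) (w : c.W) : Prop :=
  w ∈ c.Wsub T ∧ ∀ u ∈ c.Wsub S, c.len w ≤ c.len (w * u)

/-- `w` is the longest element of `W_S` -/
def IsLongest {n : ℕ} (c : RootSystemData n) (S : Finset (Fin n)) (w : c.W) : Prop :=
  w ∈ c.Wsub S ∧ ∀ v ∈ c.Wsub S, c.len v ≤ c.len w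

end RootSystemData

/-- the support of `γ` is contained in `S`, i.e. `γ` lies in the span of
`{α_i : i ∈ S}` (for a root `γ`, membership in `R_S`) -/
def suppIn {n : ℕ} (S : Finset (Fin n)) (γ : Fin n → ℤ) : Prop :=
  ∀ i, i ∉ S → γ i = 0

/-- `Δ_j` for `0 ≤ j ≤ r+1`: the index set of the first `j` simple roots for `j ≤ r`,
and all of `Δ` for `j = r+1`.  (Indices of simple roots are `0`-based, so
`α_1, …, α_j` correspond to the indices `0, …, j-1`.) -/
def deltaSet (n r j : ℕ) : Finset (Fin n) :=
  if j = r + 1 then Finset.univ else Finset.univ.filter fun i => (i : ℕ) < j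

namespace RootSystemData

/-- `v 0, …, v r` (standing for `v_1, …, v_{r+1}`) is the decomposition of `w`
associated to `(Δ_P, Υ)`:  each `v_i ∈ W_{Δ_i}^{Δ_{i-1}}` and `w = v_{r+1} v_r ⋯ v_1`. -/
def IsDecomp {n : ℕ} (c : RootSystemData n) (r : ℕ) (w : c.W)
    (v : Fin (r + 1) → c.W) : Prop :=
  (∀ k : Fin (r + 1), c.MinRep (deltaSet n r ((k : ℕ) + 1)) (deltaSet n r (k : ℕ)) (v k)) ∧
    w = (List.ofFn v).reverse.prod

/-- the first `m` simple roots `α_1, …, α_m` form a path of type `A_m`: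
`⟨α_i, α_j^∨⟩ = -1` if `|i-j| = 1` and `⟨α_i, α_j^∨⟩ = 0` if `|i-j| ≥ 2`. -/
def PathA {n : ℕ} (c : RootSystemData n) (m : ℕ) : Prop :=
  ∀ i j : Fin n, (i : ℕ) < m → (j : ℕ) < m →
    (((i : ℕ) + 1 = (j : ℕ) ∨ (j : ℕ) + 1 = (i : ℕ)) → c.A i j = -1) ∧
    ((i : ℕ) + 2 ≤ (j : ℕ) ∨ (j : ℕ) + 2 ≤ (i : ℕ) → c.A i j = 0)

/-- `u_{[k,m]} = s_k s_{k+1} ⋯ s_m` (`1`-based indices; `u_{[k,m]} = 1` for `k > m`) -/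
def uu {n : ℕ} (c : RootSystemData n) (k m : ℕ) : c.W :=
  ((List.range' k (m + 1 - k)).map fun t => c.sN (t - 1)).prod

/-- `u_i^{(m)} = s_{m-i+1} s_{m-i+2} ⋯ s_m` -/
def uElt {n : ℕ} (c : RootSystemData n) (i m : ℕ) : c.W := c.uu (m - i + 1) m

end RootSystemData

/-- strict lexicographic order on `Fin m → ℤ` -/
def lexLT {m : ℕ} (x y : Fin m → ℤ) : Prop :=
  ∃ j, x j < y j ∧ ∀ k, k < j → x k = y k

/-- lexicographic order on `Fin m → ℤ` -/
def lexLE {m : ℕ} (x y : Fin m → ℤ) : Prop := x = y ∨ lexLT x y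

/-- the grading `gr(q_{α_{j+1}^∨}) ∈ ℤ^{r+1}` (for the `0`-based index `j < r`), when
`Δ_P` is of type `A_r`: in `1`-based terms, `gr(q_{α_1^∨}) = 2·e_1` and
`gr(q_{α_j^∨}) = (1-j)·e_{j-1} + (1+j)·e_j` for `2 ≤ j ≤ r`. -/
def grQ (r j : ℕ) : Fin (r + 1) → ℤ := fun k =>
  (if (k : ℕ) = j then (j : ℤ) + 2 else 0) + (if (k : ℕ) + 1 = j then -(j : ℤ) else 0)

/-- the grading `gr(q_λ)` for `λ ∈ Q_P^∨` (coordinates in simple coroots), extended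
additively from the `gr(q_{α_j^∨})`, when `Δ_P` is of type `A_r` -/
def grQlam (n r : ℕ) (lam : Fin n → ℤ) : Fin (r + 1) → ℤ :=
  fun k => ∑ j, lam j * grQ r (j : ℕ) k

lemma suppIn_mono {n : ℕ} {S T : Finset (Fin n)} (hST : S ⊆ T) {z : Fin n → ℤ}
    (hz : suppIn S z) : suppIn T z :=
  fun i hi => hz i fun h => hi (hST h)

lemma mem_deltaSet {n r j : ℕ} (hj : j ≤ r) {i : Fin n} : i ∈ deltaSet n r j ↔ (i : ℕ) < j := by
  simp [deltaSet, show j ≠ r + 1 by omega]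

lemma deltaSet_mono {n r i j : ℕ} (hij : i ≤ j) (hj : j ≤ r + 1) :
    deltaSet n r i ⊆ deltaSet n r j := by
  intro x
  simp only [deltaSet]
  split_ifs <;> simp <;> omega

lemma suppIn_deltaSet_iff {n r j : ℕ} (hj : j ≤ r) {z : Fin n → ℤ} :
    suppIn (deltaSet n r j) z ↔ ∀ i : Fin n, j ≤ i → z i = 0 := by
  simp [suppIn, mem_deltaSet hj]

namespace RootSystemData

variable {n : ℕ} (c : RootSystemData n)

/-! ### The action on the root lattice -/

lemma sroot_mem (i : Fin n) : c.sroot i ∈ c.R := c.simple_mem i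

lemma sroot_nonneg (i : Fin n) : 0 ≤ c.sroot i := by simp [sroot]

lemma pair_add (x y l : Fin n → ℤ) : c.pair (x + y) l = c.pair x l + c.pair y l := by
  simp [pair, add_mul, Finset.sum_add_distrib]

lemma pair_sroot (i : Fin n) (l : Fin n → ℤ) : c.pair (c.sroot i) l = ∑ j, c.A i j * l j := by
  simp [pair, sroot, Pi.single_apply]

lemma pair_eq_sum (x l : Fin n → ℤ) : c.pair x l = ∑ i, x i * c.pair (c.sroot i) l := by
  simp only [pair_sroot, Finset.mul_sum]
  simp only [pair, mul_assoc]

lemma pair_sroot_sroot (i j : Fin n) : c.pair (c.sroot i) (c.sroot j) = c.A i j := by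
  rw [pair_sroot]
  simp [sroot, Pi.single_apply]

lemma A_self (i : Fin n) : c.A i i = 2 := by
  rw [← pair_sroot_sroot, ← c.pair_self _ (c.sroot_mem i), sroot, c.cor_simple, pair]

lemma act_σ {γ : Fin n → ℤ} (hγ : γ ∈ c.R) (x : Fin n → ℤ) :
    c.act (c.σ γ) x = x - c.pair x (c.cor γ) • γ :=
  c.act_refl γ hγ x

lemma act_s (i : Fin n) (x : Fin n → ℤ) :
    c.act (c.s i) x = x - c.pair x (c.sroot i) • c.sroot i := by
  rw [s, c.act_σ (c.sroot_mem i), sroot, c.cor_simple]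

lemma act_s_sroot (i j : Fin n) :
    c.act (c.s j) (c.sroot i) = c.sroot i - c.A i j • c.sroot j := by
  rw [act_s, pair_sroot_sroot]

lemma act_s_sroot_self (i : Fin n) : c.act (c.s i) (c.sroot i) = -c.sroot i := by
  rw [act_s_sroot, A_self]
  module

lemma act_s_apply_of_ne {i j : Fin n} (h : j ≠ i) (x : Fin n → ℤ) :
    c.act (c.s i) x j = x j := by
  simp [act_s, sroot, h]

lemma s_mul_s (i : Fin n) : c.s i * c.s i = 1 := c.refl_sq _ (c.sroot_mem i)

lemma act_s_act_s (i : Fin n) (x : Fin n → ℤ) : c.act (c.s i) (c.act (c.s i) x) = x := by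
  rw [← c.act_mul, s_mul_s, c.act_one]

lemma act_inv_act (w : c.W) (x : Fin n → ℤ) : c.act w⁻¹ (c.act w x) = x := by
  rw [← c.act_mul, inv_mul_cancel, c.act_one]

lemma act_act_inv (w : c.W) (x : Fin n → ℤ) : c.act w (c.act w⁻¹ x) = x := by
  rw [← c.act_mul, mul_inv_cancel, c.act_one]

lemma act_injective (w : c.W) : Function.Injective (c.act w) :=
  Function.LeftInverse.injective (c.act_inv_act w)

lemma exists_word (w : c.W) : ∃ l : List (Fin n), (l.map c.s).prod = w :=
  (c.generated w).imp fun _ h => h.symm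

lemma act_add (w : c.W) (x y : Fin n → ℤ) : c.act w (x + y) = c.act w x + c.act w y := by
  obtain ⟨l, rfl⟩ := c.exists_word w
  induction l with
  | nil => simp [c.act_one]
  | cons i l ih =>
    simp only [List.map_cons, List.prod_cons, c.act_mul, ih, act_s, pair_add, add_smul]
    abel

/-- The action of `w` as a linear map.  Additivity of `act` is not part of `RootSystemData`; it
holds because simple reflections act additively and generate `W`. -/
def actLinear (w : c.W) : (Fin n → ℤ) →ₗ[ℤ] (Fin n → ℤ) :=
  (AddMonoidHom.mk' (c.act w) (c.act_add w)).toIntLinearMap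

lemma actLinear_apply (w : c.W) (x : Fin n → ℤ) : c.actLinear w x = c.act w x := rfl

lemma act_neg (w : c.W) (x : Fin n → ℤ) : c.act w (-x) = -c.act w x :=
  map_neg (c.actLinear w) x

lemma act_sub_smul (w : c.W) (x y : Fin n → ℤ) (k : ℤ) :
    c.act w (x - k • y) = c.act w x - k • c.act w y := by
  simp only [← actLinear_apply, map_sub, map_smul]

lemma act_eq_sum (w : c.W) (x : Fin n → ℤ) :
    c.act w x = ∑ i, x i • c.act w (c.sroot i) := by
  have hx : x = ∑ i, x i • c.sroot i := by
    ext j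
    simp [sroot, Pi.single_apply]
  simp only [← actLinear_apply]
  nth_rewrite 1 [hx]
  simp only [map_sum, map_smul]

/-! ### Positive roots -/

lemma nonneg_of_apply_pos {β : Fin n → ℤ} (hβ : β ∈ c.R) {i : Fin n} (hi : 0 < β i) : 0 ≤ β :=
  (c.pos_or_neg β hβ).resolve_right fun h => (h i).not_gt hi

lemma neg_nonneg_iff {β : Fin n → ℤ} (hβ : β ∈ c.R) : 0 ≤ -β ↔ ¬ 0 ≤ β := by
  refine ⟨fun hneg hpos => c.root_ne_zero β hβ (le_antisymm (neg_nonneg.1 hneg) hpos), fun h => ?_⟩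
  exact neg_nonneg.2 ((c.pos_or_neg β hβ).resolve_left h)

lemma act_s_nonneg {β : Fin n → ℤ} (hβ : β ∈ c.R) (hpos : 0 ≤ β) {i : Fin n}
    (hne : β ≠ c.sroot i) : 0 ≤ c.act (c.s i) β := by
  by_contra hneg
  have hsupp : ∀ j, j ≠ i → β j = 0 := by
    intro j hj
    by_contra h
    refine hneg (c.nonneg_of_apply_pos (c.act_mem _ _ hβ) (i := j) ?_)
    rw [c.act_s_apply_of_ne hj]
    exact (hpos j).lt_of_ne' h
  have hmul : β = β i • c.sroot i := by
    ext j
    by_cases hj : j = i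
    · simp [hj, sroot]
    · simp [hsupp j hj, sroot, hj]
  rcases c.reduced _ (c.sroot_mem i) (β i) (hmul ▸ hβ) with h | h
  · exact hne (by rw [hmul, h, one_smul])
  · have := hpos i
    simp [h] at this

/-! ### Length and inversions -/

lemma len_prod_le (l : List (Fin n)) : c.len (l.map c.s).prod ≤ l.length :=
  Nat.sInf_le ⟨l, rfl, rfl⟩

lemma exists_reduced_word (w : c.W) :
    ∃ l : List (Fin n), l.length = c.len w ∧ (l.map c.s).prod = w :=
  Nat.sInf_mem (s := {k | ∃ l : List (Fin n), l.length = k ∧ (l.map c.s).prod = w})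
    ((c.exists_word w).imp' List.length fun l hl => ⟨l, rfl, hl⟩)

lemma len_one : c.len 1 = 0 := Nat.le_zero.1 (c.len_prod_le [])

lemma len_mul_le (w w' : c.W) : c.len (w * w') ≤ c.len w + c.len w' := by
  obtain ⟨l, hl, rfl⟩ := c.exists_reduced_word w
  obtain ⟨l', hl', rfl⟩ := c.exists_reduced_word w'
  rw [← hl, ← hl', ← List.prod_append, ← List.map_append, ← List.length_append]
  exact c.len_prod_le _

lemma len_s_le (i : Fin n) : c.len (c.s i) ≤ 1 := by
  simpa using c.len_prod_le [i]

lemma exists_eq_mul_s {w : c.W} {k : ℕ} (hw : c.len w = k + 1) :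
    ∃ (u : c.W) (i : Fin n), w = u * c.s i ∧ c.len u = k := by
  obtain ⟨l, hlen, rfl⟩ := c.exists_reduced_word w
  rcases List.eq_nil_or_concat l with rfl | ⟨l, i, rfl⟩
  · simp [len_one] at hw
  simp only [List.concat_eq_append, List.map_append, List.prod_append, List.map_singleton,
    List.prod_singleton, List.length_append, List.length_singleton] at hw hlen ⊢
  refine ⟨_, i, rfl, ?_⟩
  have hle := c.len_prod_le l
  have hmul := c.len_mul_le (l.map c.s).prod (c.s i)
  have hs := c.len_s_le i
  omega

lemma exchange {i : Fin n} {l : List (Fin n)} (h : ¬ 0 ≤ c.act (l.map c.s).prod (c.sroot i)) :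
    ∃ l' : List (Fin n), l'.length + 1 = l.length ∧
      (l'.map c.s).prod = (l.map c.s).prod * c.s i := by
  induction l with
  | nil => exact absurd (c.sroot_nonneg i) (by simpa [c.act_one] using h)
  | cons j l ih =>
    set u := (l.map c.s).prod
    by_cases hu : 0 ≤ c.act u (c.sroot i)
    · -- The sign changes at the letter `j`, so `u α_i = α_j`, i.e. `s_j = u s_i u⁻¹`.
      have hj : c.act u (c.sroot i) = c.sroot j := by
        by_contra hne
        refine h ?_
        rw [List.map_cons, List.prod_cons, c.act_mul]
        exact c.act_s_nonneg (c.act_mem _ _ (c.sroot_mem i)) hu hne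
      have hconj : c.s j = u * c.s i * u⁻¹ := by
        rw [s, ← hj]
        exact c.refl_act u _ (c.sroot_mem i)
      refine ⟨l, rfl, ?_⟩
      rw [List.map_cons, List.prod_cons, hconj, inv_mul_cancel_right, mul_assoc, s_mul_s, mul_one]
    · obtain ⟨l', hlen, hprod⟩ := ih hu
      exact ⟨j :: l', by simp [hlen], by simp [hprod, mul_assoc, u]⟩

lemma len_mul_s_lt {w : c.W} {i : Fin n} (h : ¬ 0 ≤ c.act w (c.sroot i)) :
    c.len (w * c.s i) < c.len w := by
  obtain ⟨l, hlen, rfl⟩ := c.exists_reduced_word w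
  obtain ⟨l', hlen', hprod⟩ := c.exchange h
  rw [← hprod]
  have := c.len_prod_le l'
  omega

open Classical in
/-- The inversion set of `w`: the positive roots made negative by `w`. -/
noncomputable def inversions (w : c.W) : Finset (Fin n → ℤ) :=
  c.R.filter fun β => 0 ≤ β ∧ ¬ 0 ≤ c.act w β

lemma mem_inversions {w : c.W} {β : Fin n → ℤ} :
    β ∈ c.inversions w ↔ β ∈ c.R ∧ 0 ≤ β ∧ ¬ 0 ≤ c.act w β := by
  simp [inversions]

lemma inversions_one : c.inversions 1 = ∅ := by
  ext β
  simp +contextual [mem_inversions, c.act_one]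

lemma card_inversions_mul_s {w : c.W} {i : Fin n} (h : 0 ≤ c.act w (c.sroot i)) :
    (c.inversions (w * c.s i)).card = (c.inversions w).card + 1 := by
  have hi : c.sroot i ∈ c.inversions (w * c.s i) := by
    refine c.mem_inversions.2 ⟨c.sroot_mem i, c.sroot_nonneg i, ?_⟩
    rw [c.act_mul, act_s_sroot_self, act_neg, c.neg_nonneg_iff (c.act_mem _ _ (c.sroot_mem i))]
    exact not_not.2 h
  rw [← Finset.card_erase_add_one hi]
  congr 1
  refine Finset.card_nbij' (c.act (c.s i)) (c.act (c.s i)) (fun β hβ => ?_) (fun β hβ => ?_)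
    (fun β _ => c.act_s_act_s i β) fun β _ => c.act_s_act_s i β
  · obtain ⟨hne, hβ⟩ := Finset.mem_erase.1 hβ
    obtain ⟨hR, hpos, hneg⟩ := c.mem_inversions.1 hβ
    exact c.mem_inversions.2 ⟨c.act_mem _ _ hR, c.act_s_nonneg hR hpos hne, by rwa [← c.act_mul]⟩
  · obtain ⟨hR, hpos, hneg⟩ := c.mem_inversions.1 hβ
    refine Finset.mem_erase.2 ⟨fun he => ?_, c.mem_inversions.2 ⟨c.act_mem _ _ hR, ?_, ?_⟩⟩
    · rw [← c.act_s_act_s i β, he, act_s_sroot_self, c.neg_nonneg_iff (c.sroot_mem i)] at hpos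
      exact hpos (c.sroot_nonneg i)
    · exact c.act_s_nonneg hR hpos fun he => hneg (he ▸ h)
    · rwa [c.act_mul, act_s_act_s]

lemma len_eq_card_inversions (w : c.W) : c.len w = (c.inversions w).card := by
  induction hk : c.len w generalizing w with
  | zero =>
    obtain ⟨l, hlen, rfl⟩ := c.exists_reduced_word w
    rw [hk, List.length_eq_zero_iff] at hlen
    simp [hlen, inversions_one]
  | succ k ih =>
    obtain ⟨u, i, rfl, hu⟩ := c.exists_eq_mul_s hk
    have hpos : 0 ≤ c.act u (c.sroot i) := by
      by_contra hneg
      have := c.len_mul_s_lt hneg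
      omega
    rw [c.card_inversions_mul_s hpos, ← ih u hu]

/-! ### Parabolic subgroups and minimal coset representatives -/

section Parabolic

variable {c} {S T : Finset (Fin n)} {u v x y : c.W}

lemma Wsub_mono (hST : S ⊆ T) : c.Wsub S ≤ c.Wsub T :=
  Subgroup.closure_mono (Set.image_mono (Finset.coe_subset.2 hST))

lemma s_mem_Wsub {i : Fin n} (hi : i ∈ S) : c.s i ∈ c.Wsub S :=
  Subgroup.subset_closure ⟨i, hi, rfl⟩

lemma act_apply_of_mem_Wsub (hu : u ∈ c.Wsub S) (z : Fin n → ℤ) {i : Fin n} (hi : i ∉ S) :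
    c.act u z i = z i := by
  induction hu using Subgroup.closure_induction generalizing z with
  | mem _ hs =>
    obtain ⟨j, hj, rfl⟩ := hs
    exact c.act_s_apply_of_ne (ne_of_mem_of_not_mem hj hi).symm z
  | one => rw [c.act_one]
  | mul _ _ _ _ h₁ h₂ => rw [c.act_mul, h₁, h₂]
  | inv u _ h => rw [← h (c.act u⁻¹ z), act_act_inv]

lemma suppIn_act_iff (hu : u ∈ c.Wsub S) (hST : S ⊆ T) (z : Fin n → ℤ) :
    suppIn T (c.act u z) ↔ suppIn T z :=
  forall₂_congr fun _ hi => by rw [act_apply_of_mem_Wsub hu z fun h => hi (hST h)]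

lemma act_nonneg_of_not_suppIn (hu : u ∈ c.Wsub S) {β : Fin n → ℤ} (hβ : β ∈ c.R)
    (hpos : 0 ≤ β) (hsupp : ¬ suppIn S β) : 0 ≤ c.act u β := by
  simp only [suppIn, not_forall] at hsupp
  obtain ⟨i, hi, hne⟩ := hsupp
  refine c.nonneg_of_apply_pos (c.act_mem _ _ hβ) (i := i) ?_
  rw [act_apply_of_mem_Wsub hu β hi]
  exact (hpos i).lt_of_ne' hne

lemma act_nonneg_of_suppIn (hx : ∀ i ∈ S, 0 ≤ c.act x (c.sroot i)) {z : Fin n → ℤ}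
    (hz : suppIn S z) (hpos : 0 ≤ z) : 0 ≤ c.act x z := by
  rw [act_eq_sum]
  refine Finset.sum_nonneg fun i _ => ?_
  by_cases hi : i ∈ S
  · exact smul_nonneg (hpos i) (hx i hi)
  · rw [hz i hi, zero_smul]

lemma act_nonneg_iff_of_suppIn (hx : ∀ i ∈ S, 0 ≤ c.act x (c.sroot i)) {β : Fin n → ℤ}
    (hβ : β ∈ c.R) (hsupp : suppIn S β) : 0 ≤ c.act x β ↔ 0 ≤ β := by
  refine ⟨fun h => ?_, act_nonneg_of_suppIn hx hsupp⟩
  by_contra hneg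
  have hneg' := act_nonneg_of_suppIn hx (z := -β) (fun i hi => by simp [hsupp i hi])
    ((c.neg_nonneg_iff hβ).2 hneg)
  rw [act_neg, c.neg_nonneg_iff (c.act_mem _ _ hβ)] at hneg'
  exact hneg' h

lemma MinRep.act_sroot_nonneg (hv : c.MinRep T S v) {i : Fin n} (hi : i ∈ S) :
    0 ≤ c.act v (c.sroot i) := by
  by_contra hneg
  exact (hv.2 _ (s_mem_Wsub hi)).not_gt (c.len_mul_s_lt hneg)

variable (c S T) in
open Classical in
/-- The inversions of `w` that lie in `R_T` but not in `R_S`. -/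
noncomputable def inversionsBetween (w : c.W) : Finset (Fin n → ℤ) :=
  (c.inversions w).filter fun β => suppIn T β ∧ ¬ suppIn S β

lemma mem_inversionsBetween {w : c.W} {β : Fin n → ℤ} :
    β ∈ c.inversionsBetween S T w ↔
      (β ∈ c.R ∧ 0 ≤ β ∧ ¬ 0 ≤ c.act w β) ∧ suppIn T β ∧ ¬ suppIn S β := by
  simp [inversionsBetween, mem_inversions]

lemma MinRep.inversionsBetween_eq (hv : c.MinRep T S v) :
    c.inversionsBetween S T v = c.inversions v := by
  ext β
  rw [mem_inversionsBetween, mem_inversions]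
  refine and_iff_left_of_imp fun ⟨hR, hpos, hneg⟩ => ⟨?_, fun hS => ?_⟩
  · by_contra hT
    exact hneg (act_nonneg_of_not_suppIn hv.1 hR hpos hT)
  · exact hneg (act_nonneg_of_suppIn (fun _ => hv.act_sroot_nonneg) hS hpos)

lemma act_mem_inversionsBetween (hST : S ⊆ T) (hy : y ∈ c.Wsub S) {w : c.W} {β : Fin n → ℤ}
    (hβ : β ∈ c.inversionsBetween S T (w * y)) : c.act y β ∈ c.inversionsBetween S T w := by
  obtain ⟨⟨hR, hpos, hneg⟩, hT, hS⟩ := mem_inversionsBetween.1 hβ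
  rw [c.act_mul] at hneg
  exact mem_inversionsBetween.2 ⟨⟨c.act_mem _ _ hR, act_nonneg_of_not_suppIn hy hR hpos hS, hneg⟩,
    (suppIn_act_iff hy hST β).2 hT, (suppIn_act_iff hy subset_rfl β).not.2 hS⟩

lemma card_inversionsBetween_mul_right (hST : S ⊆ T) (hy : y ∈ c.Wsub S) (w : c.W) :
    (c.inversionsBetween S T (w * y)).card = (c.inversionsBetween S T w).card :=
  Finset.card_nbij' (c.act y) (c.act y⁻¹) (fun _ => act_mem_inversionsBetween hST hy)
    (fun _ hβ => act_mem_inversionsBetween hST (inv_mem hy) (by rwa [mul_inv_cancel_right]))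
    (fun β _ => c.act_inv_act y β) fun β _ => c.act_act_inv y β

lemma inversionsBetween_mul_left (hx : ∀ i ∈ T, 0 ≤ c.act x (c.sroot i)) (hu : u ∈ c.Wsub T) :
    c.inversionsBetween S T (x * u) = c.inversionsBetween S T u := by
  ext β
  simp only [mem_inversionsBetween, c.act_mul]
  refine and_congr_left fun ⟨hT, _⟩ => and_congr_right fun hR => ?_
  rw [act_nonneg_iff_of_suppIn hx (c.act_mem _ _ hR) ((suppIn_act_iff hu subset_rfl β).2 hT)]

lemma MinRep.len_eq_card_inversionsBetween (hv : c.MinRep T S v) (hST : S ⊆ T)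
    (hx : ∀ i ∈ T, 0 ≤ c.act x (c.sroot i)) (hy : y ∈ c.Wsub S) :
    c.len v = (c.inversionsBetween S T (x * v * y)).card := by
  rw [card_inversionsBetween_mul_right hST hy, inversionsBetween_mul_left hx hv.1,
    hv.inversionsBetween_eq, len_eq_card_inversions]

end Parabolic

/-! ### The components of the grading -/

section Decomposition

variable {c} {r : ℕ} {w : c.W} {v : Fin (r + 1) → c.W}

lemma IsDecomp.prod_take_mem (hv : c.IsDecomp r w v) {j : ℕ} (hj : j ≤ r + 1) :
    ((List.ofFn v).take j).reverse.prod ∈ c.Wsub (deltaSet n r j) := by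
  induction j with
  | zero => simp
  | succ j ih =>
    rw [List.take_succ_eq_append_getElem (by simpa using hj), List.reverse_append, List.prod_append,
      List.reverse_singleton, List.prod_singleton, List.getElem_ofFn]
    exact mul_mem (hv.1 ⟨j, hj⟩).1
      (Wsub_mono (deltaSet_mono j.le_succ hj) (ih (by omega)))

lemma IsDecomp.act_prod_drop_nonneg (hv : c.IsDecomp r w v) {j : ℕ} (hj : j ≤ r + 1) :
    ∀ i ∈ deltaSet n r j, 0 ≤ c.act ((List.ofFn v).drop j).reverse.prod (c.sroot i) := by
  induction hj using Nat.decreasingInduction with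
  | self =>
    intro i _
    rw [List.drop_of_length_le (by simp), List.reverse_nil, List.prod_nil, c.act_one]
    exact c.sroot_nonneg i
  | of_succ j hj ih =>
    intro i hi
    have hvj := hv.1 ⟨j, hj⟩
    rw [List.drop_eq_getElem_cons (by simpa using hj), List.reverse_cons, List.prod_append,
      List.prod_singleton, List.getElem_ofFn, c.act_mul]
    refine act_nonneg_of_suppIn ih ?_ (hvj.act_sroot_nonneg hi)
    refine (suppIn_act_iff hvj.1 subset_rfl _).2 fun k hk => ?_
    have hki : k ≠ i := fun h => hk (h ▸ deltaSet_mono j.le_succ hj hi)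
    simp [sroot, hki]

lemma IsDecomp.len_eq_card (hv : c.IsDecomp r w v) (k : Fin (r + 1)) :
    c.len (v k) =
      (c.inversionsBetween (deltaSet n r k) (deltaSet n r (k + 1)) w).card := by
  have hw : w = ((List.ofFn v).drop (k + 1)).reverse.prod * v k *
      ((List.ofFn v).take k).reverse.prod := by
    have hk : (k : ℕ) < (List.ofFn v).length := by simpa using k.is_le
    conv_lhs => rw [hv.2, ← List.take_append_drop k (List.ofFn v), List.drop_eq_getElem_cons hk]
    simp only [List.reverse_append, List.reverse_cons, List.prod_append, List.prod_singleton,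
      List.getElem_ofFn, Fin.eta]
  rw [hw]
  exact (hv.1 k).len_eq_card_inversionsBetween (deltaSet_mono (Nat.le_succ _) k.isLt)
    (hv.act_prod_drop_nonneg (Nat.succ_le_of_lt k.isLt)) (hv.prod_take_mem k.isLt.le)

end Decomposition

/-! ### The type `A` part -/

lemma sN_coe (i : Fin n) : c.sN i = c.s i := by simp [sN]

lemma uu_one_succ (m : ℕ) : c.uu 1 (m + 1) = c.uu 1 m * c.sN m := by
  simp [uu, List.range'_1_concat, Nat.add_comm]

lemma uu_one_mul_uu {m l : ℕ} (h : m ≤ l) : c.uu 1 m * c.uu (m + 1) l = c.uu 1 l := by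
  simp only [uu, ← List.prod_append, ← List.map_append, Nat.add_sub_add_right, Nat.add_sub_cancel]
  rw [Nat.add_comm m 1, List.range'_append_1, Nat.add_sub_cancel' h]

lemma uu_mem_Wsub {k m : ℕ} {S : Finset (Fin n)} (hS : ∀ i : Fin n, k ≤ (i : ℕ) + 1 → i ∈ S) :
    c.uu k m ∈ c.Wsub S := by
  refine list_prod_mem fun g hg => ?_
  obtain ⟨t, ht, rfl⟩ := List.mem_map.1 hg
  have hkt := (List.mem_range'_1.1 ht).1
  rw [sN]
  split_ifs with h
  · exact s_mem_Wsub (hS _ (by simp only; omega))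
  · exact one_mem _

lemma len_uu_one_le (m : ℕ) : c.len (c.uu 1 m) ≤ m := by
  induction m with
  | zero => simp [uu, len_one]
  | succ m ih =>
    have hs : c.len (c.sN m) ≤ 1 := by
      rw [sN]
      split_ifs
      · exact c.len_s_le _
      · simp [len_one]
    rw [uu_one_succ]
    exact (c.len_mul_le _ _).trans (add_le_add ih hs)

section PathA

variable {c} {r : ℕ} (hA : c.PathA r)
include hA

lemma PathA.A_eq {i j : Fin n} (hi : (i : ℕ) < r) (hj : (j : ℕ) < r) :
    c.A i j = if (i : ℕ) = j then 2 else if (i : ℕ) + 1 = j ∨ (j : ℕ) + 1 = i then -1 else 0 := by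
  split_ifs with h h'
  · rw [Fin.ext h, A_self]
  · exact (hA i j hi hj).1 h'
  · exact (hA i j hi hj).2 (by omega)

lemma PathA.act_uu_one_sroot_apply {o i : Fin n} (ho : (o : ℕ) = 0) (hi : (i : ℕ) < r) {m : ℕ}
    (hmr : m ≤ r) (hmn : m ≤ n) :
    c.act (c.uu 1 m) (c.sroot i) o =
      if (i : ℕ) = m then 1 else if (i : ℕ) + 1 = m then -1 else 0 := by
  induction m generalizing i with
  | zero => simp [uu, c.act_one, sroot, Pi.single_apply, Fin.ext_iff, ho, eq_comm]
  | succ m ih =>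
    let j : Fin n := ⟨m, hmn⟩
    have hj : (j : ℕ) < r := hmr
    rw [uu_one_succ, show c.sN m = c.s j from c.sN_coe j, c.act_mul, act_s_sroot, act_sub_smul,
      Pi.sub_apply, Pi.smul_apply, ih hi (by omega) (by omega), ih hj (by omega) (by omega),
      hA.A_eq hi hj]
    simp only [j, smul_eq_mul, if_true, mul_one]
    split_ifs <;> omega

lemma PathA.act_uu_one_apply {o k : Fin n} (ho : (o : ℕ) = 0) (hk : (k : ℕ) < r)
    {z : Fin n → ℤ} (hz : ∀ i, k < i → z i = 0) : c.act (c.uu 1 (k + 1)) z o = -z k := by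
  rw [act_eq_sum, Finset.sum_apply, Finset.sum_eq_single k]
  · simp [hA.act_uu_one_sroot_apply ho hk hk k.isLt]
  · intro i _ hne
    rcases hne.lt_or_gt with h | h
    · rw [Pi.smul_apply, hA.act_uu_one_sroot_apply ho (lt_trans h hk) hk k.isLt,
        if_neg (by omega), if_neg (by omega), smul_zero]
    · simp [hz i h]
  · simp

/- The roots in `F` are among the `α_p + ⋯ + α_k` with `p ≤ b` (`0`-based), but instead of
classifying them it suffices that `s_{b+1} ⋯ s_k` sends them to inversions of `s_0 ⋯ s_b`. -/
lemma PathA.card_le_of_apply_ne_zero {b k : Fin n} (hbk : b ≤ k) (hk : (k : ℕ) < r)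
    {F : Finset (Fin n → ℤ)}
    (hF : ∀ β ∈ F, β ∈ c.R ∧ 0 ≤ β ∧ (∀ i, k < i → β i = 0) ∧ β k ≠ 0 ∧ β b ≠ 0) :
    F.card ≤ b + 1 := by
  have hmaps : ∀ β ∈ F, c.act (c.uu (b + 2) (k + 1)) β ∈ c.inversions (c.uu 1 (b + 1)) := by
    intro β hβ
    obtain ⟨hR, hpos, hsupp, hβk, hβb⟩ := hF β hβ
    have hmem := c.act_mem (c.uu (b + 2) (k + 1)) _ hR
    have hu : c.uu (b + 2) (k + 1) ∈ c.Wsub (Finset.Ioi b) :=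
      c.uu_mem_Wsub fun i hi => Finset.mem_Ioi.2 (by omega)
    refine c.mem_inversions.2 ⟨hmem, c.nonneg_of_apply_pos hmem (i := b) ?_, fun hneg => ?_⟩
    · rw [act_apply_of_mem_Wsub hu β (by simp)]
      exact (hpos b).lt_of_ne' hβb
    · let o : Fin n := ⟨0, k.pos⟩
      have ho := hA.act_uu_one_apply (o := o) rfl hk hsupp
      rw [← c.uu_one_mul_uu (show (b : ℕ) + 1 ≤ k + 1 by omega), c.act_mul] at ho
      have hk0 := (hpos k).lt_of_ne' hβk
      have := hneg o
      simp only [Pi.zero_apply, ho] at this hk0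
      omega
  calc F.card ≤ (c.inversions (c.uu 1 (b + 1))).card :=
        Finset.card_le_card_of_injOn _ hmaps (c.act_injective _).injOn
    _ = c.len (c.uu 1 (b + 1)) := (c.len_eq_card_inversions _).symm
    _ ≤ b + 1 := c.len_uu_one_le _

end PathA

/-! ### Comparison of the gradings -/

section Comparison

variable {c} {r : ℕ} {b : Fin n} {w w' : c.W} {v v' : Fin (r + 1) → c.W}

lemma act_σ_eq_self {γ β : Fin n → ℤ} (hγ : γ ∈ c.R)
    (h : ∀ i, β i = 0 ∨ c.pair (c.sroot i) (c.cor γ) = 0) : c.act (c.σ γ) β = β := by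
  have hpair : c.pair β (c.cor γ) = 0 := by
    rw [pair_eq_sum]
    exact Finset.sum_eq_zero fun i _ => mul_eq_zero.2 (h i)
  rw [c.act_σ hγ, hpair, zero_smul, sub_zero]

lemma PathA.card_filter_inversionsBetween_le (hA : c.PathA r) (w : c.W) {k : Fin n} (hbk : b ≤ k)
    (hk : (k : ℕ) < r) :
    ((c.inversionsBetween (deltaSet n r k) (deltaSet n r (k + 1)) w).filter
      fun β => β b ≠ 0).card ≤ b + 1 := by
  have hmem : ∀ β ∈ (c.inversionsBetween (deltaSet n r k) (deltaSet n r (k + 1)) w).filter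
      (fun β => β b ≠ 0), β ∈ c.R ∧ 0 ≤ β ∧ (∀ i, k < i → β i = 0) ∧ β k ≠ 0 ∧ β b ≠ 0 := by
    intro β hβ
    obtain ⟨hβ, hβb⟩ := Finset.mem_filter.1 hβ
    obtain ⟨⟨hR, hpos, -⟩, hT, hS⟩ := mem_inversionsBetween.1 hβ
    rw [suppIn_deltaSet_iff hk] at hT
    refine ⟨hR, hpos, hT, fun hβk => hS ?_, hβb⟩
    refine (suppIn_deltaSet_iff hk.le).2 fun i hi => ?_
    rcases (show k ≤ i from hi).eq_or_lt with rfl | h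
    · exact hβk
    · exact hT i h
  exact hA.card_le_of_apply_ne_zero hbk hk hmem

variable (hv : c.IsDecomp r w v) (hv' : c.IsDecomp r w' v')
  (hact : ∀ β : Fin n → ℤ, suppIn (deltaSet n r r) β → β b = 0 → c.act w' β = c.act w β)
include hv hv' hact

lemma IsDecomp.len_eq_of_lt {k : Fin (r + 1)} (hkr : (k : ℕ) < r) (hkb : (k : ℕ) < b) :
    c.len (v' k) = c.len (v k) := by
  rw [hv.len_eq_card, hv'.len_eq_card]
  congr 1
  ext β
  simp only [mem_inversionsBetween]
  refine and_congr_left fun ⟨hT, _⟩ => ?_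
  rw [hact β (suppIn_mono (deltaSet_mono hkr r.le_succ) hT) ((suppIn_deltaSet_iff hkr).1 hT b hkb)]

lemma IsDecomp.len_le_add (hA : c.PathA r) {k : Fin (r + 1)} (hkr : (k : ℕ) < r)
    (hkn : (k : ℕ) < n) (hbk : (b : ℕ) ≤ k) : c.len (v' k) ≤ c.len (v k) + (b + 1) := by
  have hsub : (c.inversionsBetween (deltaSet n r k) (deltaSet n r (k + 1)) w').filter
      (fun β => β b = 0) ⊆ c.inversionsBetween (deltaSet n r k) (deltaSet n r (k + 1)) w := by
    intro β hβ
    obtain ⟨hβ, hβb⟩ := Finset.mem_filter.1 hβ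
    obtain ⟨⟨hR, hpos, hneg⟩, hT, hS⟩ := mem_inversionsBetween.1 hβ
    rw [hact β (suppIn_mono (deltaSet_mono hkr r.le_succ) hT) hβb] at hneg
    exact mem_inversionsBetween.2 ⟨⟨hR, hpos, hneg⟩, hT, hS⟩
  rw [hv.len_eq_card, hv'.len_eq_card, ← Finset.card_filter_add_card_filter_not (fun β => β b = 0)]
  exact add_le_add (Finset.card_le_card hsub)
    (hA.card_filter_inversionsBetween_le w' (k := ⟨k, hkn⟩) hbk hkr)

end Comparison

end RootSystemData

lemma lexLE_of_le {m : ℕ} {x y : Fin m → ℤ} (h : x ≤ y) : lexLE x y := by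
  rcases h.eq_or_lt with h | h
  · exact Or.inl h
  · obtain ⟨j, hj⟩ := Pi.toLex_strictMono h
    exact Or.inr ⟨j, hj.2, hj.1⟩

theorem gr_comparison_perp_coroot_general {n : ℕ} (c : RootSystemData n)
    {r : ℕ} (hrn : r ≤ n) (hA : c.PathA r) {a : ℕ} (ha1 : 1 ≤ a) (har : a ≤ r)
    {γ : Fin n → ℤ} (hγR : γ ∈ c.R)
    (hperp : ∀ i : Fin n, (i : ℕ) < r → (i : ℕ) ≠ a - 1 → c.pair (c.sroot i) (c.cor γ) = 0)
    {w : c.W} {v v' : Fin (r + 1) → c.W}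
    (hv : c.IsDecomp r w v) (hv' : c.IsDecomp r (w * c.σ γ) v') :
    (∀ k : Fin (r + 1), (k : ℕ) < a - 1 → c.len (v' k) = c.len (v k)) ∧
    (fun k : Fin r => (c.len (v' k.castSucc) : ℤ)) ≤
      fun k : Fin r => (c.len (v k.castSucc) : ℤ) + if a - 1 ≤ (k : ℕ) then (a : ℤ) else 0 := by
  let b : Fin n := ⟨a - 1, by omega⟩
  have hact : ∀ β : Fin n → ℤ, suppIn (deltaSet n r r) β → β b = 0 →
      c.act (w * c.σ γ) β = c.act w β := by
    intro β hβ hβb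
    rw [c.act_mul, RootSystemData.act_σ_eq_self hγR fun i => ?_]
    by_cases hi : (i : ℕ) < r
    · by_cases hib : i = b
      · exact Or.inl (hib ▸ hβb)
      · exact Or.inr (hperp i hi fun h => hib (Fin.ext h))
    · exact Or.inl ((suppIn_deltaSet_iff le_rfl).1 hβ i (not_lt.1 hi))
  have hlow : ∀ k : Fin (r + 1), (k : ℕ) < a - 1 → c.len (v' k) = c.len (v k) := fun k hk =>
    hv.len_eq_of_lt hv' hact (by omega) hk
  refine ⟨hlow, fun k => ?_⟩
  dsimp only
  split_ifs with hk
  · have h := hv.len_le_add hv' hact hA (k := k.castSucc) k.isLt (k.isLt.trans_le hrn) hk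
    rw [show (b : ℕ) + 1 = a from Nat.sub_add_cancel ha1] at h
    exact_mod_cast h
  · rw [hlow k.castSucc (not_le.1 hk), add_zero]

/-- Let `1 ≤ a ≤ r` and let `γ ∈ R^+` satisfy `⟨α, γ^∨⟩ = 0` for all
`α ∈ Δ_P \ {α_a}`.  Then for any `w ∈ W`, `gr_{a-1}(w s_γ) = gr_{a-1}(w)` and
`gr_r(w s_γ) ≤ gr_r(w) + Σ_{k=a}^r a·e_k` in the lexicographic order on `ℤ^r`. -/
theorem gr_comparison_perp_coroot {n : ℕ} (c : RootSystemData n)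
    (r : ℕ) (hr1 : 1 ≤ r) (hrn : r < n) (hA : c.PathA r)
    (a : ℕ) (ha1 : 1 ≤ a) (har : a ≤ r)
    (γ : Fin n → ℤ) (hγR : γ ∈ c.R) (hγpos : ∀ i, 0 ≤ γ i)
    (hperp : ∀ i : Fin n, (i : ℕ) < r → (i : ℕ) ≠ a - 1 →
      c.pair (c.sroot i) (c.cor γ) = 0)
    (w : c.W) (v v' : Fin (r + 1) → c.W)
    (hv : c.IsDecomp r w v) (hv' : c.IsDecomp r (w * c.σ γ) v') :
    (∀ k : Fin (r + 1), (k : ℕ) < a - 1 → c.len (v' k) = c.len (v k)) ∧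
    lexLE (fun k : Fin r => (c.len (v' k.castSucc) : ℤ))
      (fun k : Fin r => (c.len (v k.castSucc) : ℤ) +
        if a - 1 ≤ (k : ℕ) then (a : ℤ) else 0) := by
  obtain ⟨hlow, hle⟩ := gr_comparison_perp_coroot_general c hrn.le hA ha1 har hγR hperp hv hv'
  exact ⟨hlow, lexLE_of_le hle⟩
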